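/- Let A be an abelian group and let ∧²A denote the quotient of A ⊗_ℤ A by the subgroup generated by all elements a⊗a. The projection A → A/2A induces a surjective homomorphism ∧²A → ∧²(A/2A) whose kernel is 2·(∧²A); consequently there is an isomorphism (∧²A) ⊗ ℤ/2 ≅ ∧²(A/2A). -/

import Mathlib

open scoped TensorProduct

noncomputable section

/-- The subgroup of `A ⊗ A` generated by the elements `a ⊗ a`. -/
def diagSub (A : Type*) [AddCommGroup A] : AddSubgroup (TensorProduct ℤ A A) :=
  AddSubgroup.closure {x | ∃ a : A, x = a ⊗ₜ[ℤ] a}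

/-- The exterior square `∧²A = (A ⊗ A)/⟨a ⊗ a⟩` of an abelian group `A`. -/
abbrev extSq (A : Type*) [AddCommGroup A] :=
  TensorProduct ℤ A A ⧸ diagSub A

/-- The subgroup `2A` of `A`. -/
def twoSub (A : Type*) [AddCommGroup A] : AddSubgroup A :=
  AddSubgroup.closure {x | ∃ a : A, x = a + a}

theorem twoSub_exists {A : Type*} [AddCommGroup A] {x : A} (hx : x ∈ twoSub A) :
    ∃ y, x = y + y := by
  induction hx using AddSubgroup.closure_induction with
  | mem x h => exact h
  | zero => exact ⟨0, by simp⟩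
  | add x y _ _ hx hy =>
    obtain ⟨a, rfl⟩ := hx
    obtain ⟨b, rfl⟩ := hy
    exact ⟨a + b, by abel⟩
  | neg x _ hx =>
    obtain ⟨a, rfl⟩ := hx
    exact ⟨-a, by abel⟩

theorem add_self_mem_twoSub {A : Type*} [AddCommGroup A] (a : A) : a + a ∈ twoSub A :=
  AddSubgroup.subset_closure ⟨a, rfl⟩

theorem quot_add_self {A : Type*} [AddCommGroup A] (q : A ⧸ twoSub A) : q + q = 0 := by
  obtain ⟨a, rfl⟩ := QuotientAddGroup.mk_surjective q
  exact (QuotientAddGroup.eq_zero_iff (a + a)).2 (add_self_mem_twoSub a)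

/-- A biadditive alternating map induces a map out of the exterior square. -/
theorem extSq_lift {A Q : Type*} [AddCommGroup A] [AddCommGroup Q] (β : A →+ A →+ Q)
    (hβ : ∀ a, β a a = 0) :
    ∃ f : extSq A →+ Q, ∀ a b : A, f (QuotientAddGroup.mk (a ⊗ₜ[ℤ] b)) = β a b := by
  let g : TensorProduct ℤ A A →+ Q := TensorProduct.liftAddHom β (by intro r m n; simp)
  have hg : ∀ a b, g (a ⊗ₜ[ℤ] b) = β a b := fun a b => rfl
  refine ⟨QuotientAddGroup.lift (diagSub A) g ?_, fun a b => hg a b⟩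
  refine (AddSubgroup.closure_le _).2 ?_
  rintro _ ⟨a, rfl⟩
  exact (hg a a).trans (hβ a)

/-- Additive maps out of the exterior square are determined by pure wedges. -/
theorem extSq_induction {A : Type*} [AddCommGroup A] {p : extSq A → Prop}
    (h0 : p 0) (h1 : ∀ a b : A, p (QuotientAddGroup.mk (a ⊗ₜ[ℤ] b)))
    (h2 : ∀ x y, p x → p y → p (x + y)) (x : extSq A) : p x := by
  obtain ⟨t, rfl⟩ := QuotientAddGroup.mk_surjective x
  induction t using TensorProduct.induction_on with
  | zero => exact h0
  | tmul a b => exact h1 a b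
  | add x y hx hy => exact h2 _ _ hx hy

/-- The wedge product as a biadditive map. -/
def wedge (A : Type*) [AddCommGroup A] : A →+ A →+ extSq A :=
  AddMonoidHom.mk' (fun a => AddMonoidHom.mk' (fun b => QuotientAddGroup.mk (a ⊗ₜ[ℤ] b))
    (by intro b c; rw [TensorProduct.tmul_add]; rfl))
    (by intro a b; ext c; change QuotientAddGroup.mk _ = _; rw [TensorProduct.add_tmul]; rfl)

theorem wedge_apply {A : Type*} [AddCommGroup A] (a b : A) :
    wedge A a b = QuotientAddGroup.mk (a ⊗ₜ[ℤ] b) := rfl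

theorem wedge_self {A : Type*} [AddCommGroup A] (a : A) : wedge A a a = 0 :=
  (QuotientAddGroup.eq_zero_iff _).2 (AddSubgroup.subset_closure ⟨a, rfl⟩)

/-- An additive map to a group killed by two descends to `A/2A`. -/
theorem twoSub_le_ker {A Q : Type*} [AddCommGroup A] [AddCommGroup Q]
    (hQ : ∀ q : Q, q + q = 0) (f : A →+ Q) : twoSub A ≤ f.ker := by
  refine (AddSubgroup.closure_le _).2 ?_
  rintro _ ⟨a, rfl⟩
  exact (map_add f a a).trans (hQ _)

theorem bilin_descend {A Q : Type*} [AddCommGroup A] [AddCommGroup Q]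
    (hQ : ∀ q : Q, q + q = 0) (β : A →+ A →+ Q) :
    ∃ γ : (A ⧸ twoSub A) →+ (A ⧸ twoSub A) →+ Q, ∀ a b : A,
      γ (QuotientAddGroup.mk a) (QuotientAddGroup.mk b) = β a b := by
  let γ₁ : (A ⧸ twoSub A) →+ A →+ Q := QuotientAddGroup.lift (twoSub A) β
    (twoSub_le_ker (fun q => by ext x; exact hQ (q x)) β)
  let γ₂ : (A ⧸ twoSub A) →+ (A ⧸ twoSub A) →+ Q := QuotientAddGroup.lift (twoSub A) γ₁.flip
    (twoSub_le_ker (fun q => by apply AddMonoidHom.ext; intro x; exact hQ (q x)) γ₁.flip)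
  exact ⟨γ₂.flip, fun a b => rfl⟩

theorem tensor_zmod_two_equiv {E B : Type*} [AddCommGroup E] [AddCommGroup B] (φ : E →+ B)
    (hs : Function.Surjective φ) (hk : ∀ x : E, φ x = 0 ↔ ∃ y : E, x = y + y) :
    Nonempty (TensorProduct ℤ E (ZMod 2) ≃+ B) := by
  have hB : ∀ b : B, 2 • b = 0 := by
    intro b
    obtain ⟨x, rfl⟩ := hs b
    rw [two_nsmul, ← map_add]
    exact (hk _).2 ⟨x, rfl⟩
  let _ : Module (ZMod 2) B := AddCommGroup.zmodModule hB
  let f : TensorProduct ℤ E (ZMod 2) →+ B :=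
    TensorProduct.liftAddHom
      (AddMonoidHom.mk' (fun x => AddMonoidHom.mk' (fun n : ZMod 2 => n • φ x)
        (fun m n => add_smul m n (φ x)))
        (by intro x y; ext; simp))
      (by
        intro r m n
        rw [map_zsmul, map_zsmul]
        rfl)
  have hf : ∀ x, f (x ⊗ₜ[ℤ] (1 : ZMod 2)) = φ x := fun x => one_smul (ZMod 2) (φ x)
  have hrep : ∀ t : TensorProduct ℤ E (ZMod 2), ∃ x : E, t = x ⊗ₜ[ℤ] (1 : ZMod 2) := by
    intro t
    induction t using TensorProduct.induction_on with
    | zero => exact ⟨0, by simp⟩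
    | tmul x n =>
      refine ⟨(n.val : ℤ) • x, ?_⟩
      rw [TensorProduct.smul_tmul]
      congr 1
      simp
    | add s t hs ht =>
      obtain ⟨x, rfl⟩ := hs
      obtain ⟨y, rfl⟩ := ht
      exact ⟨x + y, by rw [TensorProduct.add_tmul]⟩
  refine ⟨AddEquiv.ofBijective f ⟨?_, ?_⟩⟩
  · rw [injective_iff_map_eq_zero]
    intro t ht
    obtain ⟨x, rfl⟩ := hrep t
    rw [hf] at ht
    obtain ⟨y, rfl⟩ := (hk x).1 ht
    rw [TensorProduct.add_tmul, ← TensorProduct.tmul_add]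
    have : (1 : ZMod 2) + 1 = 0 := by decide
    rw [this, TensorProduct.tmul_zero]
  · intro b
    obtain ⟨x, rfl⟩ := hs b
    exact ⟨_, hf x⟩

/-- The projection `A → A/2A` induces a surjection `∧²A → ∧²(A/2A)` with kernel `2·∧²A`;
consequently `(∧²A) ⊗ ℤ/2 ≅ ∧²(A/2A)`. -/
theorem stmt_13 {A : Type*} [AddCommGroup A] :
    ∃ φ : extSq A →+ extSq (A ⧸ twoSub A),
      (∀ a b : A,
        φ (QuotientAddGroup.mk (a ⊗ₜ[ℤ] b)) =
          QuotientAddGroup.mk ((QuotientAddGroup.mk a : A ⧸ twoSub A) ⊗ₜ[ℤ]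
            (QuotientAddGroup.mk b : A ⧸ twoSub A))) ∧
      Function.Surjective φ ∧
      (∀ x : extSq A, φ x = 0 ↔ ∃ y : extSq A, x = y + y) ∧
      Nonempty (TensorProduct ℤ (extSq A) (ZMod 2) ≃+ extSq (A ⧸ twoSub A)) := by
  have h2 : ∀ q : extSq (A ⧸ twoSub A), q + q = 0 := by
    intro q
    induction q using extSq_induction with
    | h0 => simp
    | h1 a b =>
      rw [← wedge_apply, ← map_add, quot_add_self, map_zero]
    | h2 x y hx hy => rw [add_add_add_comm, hx, hy, add_zero]
  let π : A →+ A ⧸ twoSub A := QuotientAddGroup.mk' (twoSub A)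
  obtain ⟨φ, hφ⟩ := extSq_lift (((wedge (A ⧸ twoSub A)).comp π).compl₂ π)
    (fun a => wedge_self (π a))
  have hφ' : ∀ a b : A, φ (QuotientAddGroup.mk (a ⊗ₜ[ℤ] b)) =
      QuotientAddGroup.mk ((QuotientAddGroup.mk a : A ⧸ twoSub A) ⊗ₜ[ℤ]
        (QuotientAddGroup.mk b : A ⧸ twoSub A)) := fun a b => hφ a b
  have hs : Function.Surjective φ := by
    intro q
    induction q using extSq_induction with
    | h0 => exact ⟨0, map_zero φ⟩
    | h1 a b =>
      obtain ⟨a, rfl⟩ := QuotientAddGroup.mk_surjective a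
      obtain ⟨b, rfl⟩ := QuotientAddGroup.mk_surjective b
      exact ⟨_, hφ' a b⟩
    | h2 x y hx hy =>
      obtain ⟨x, rfl⟩ := hx
      obtain ⟨y, rfl⟩ := hy
      exact ⟨x + y, map_add φ x y⟩
  let ρ : extSq A →+ extSq A ⧸ twoSub (extSq A) := QuotientAddGroup.mk' (twoSub (extSq A))
  obtain ⟨γ, hγ⟩ := bilin_descend (quot_add_self (A := extSq A))
    ((AddMonoidHom.compHom ρ).comp (wedge A))
  obtain ⟨ψ, hψ⟩ := extSq_lift γ (by
    intro q
    obtain ⟨a, rfl⟩ := QuotientAddGroup.mk_surjective q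
    rw [hγ]
    change ρ (wedge A a a) = 0
    rw [wedge_self, map_zero])
  have hcomp : ∀ x, ψ (φ x) = ρ x := by
    intro x
    induction x using extSq_induction with
    | h0 => simp
    | h1 a b => rw [hφ', hψ, hγ]; rfl
    | h2 x y hx hy => rw [map_add, map_add, map_add, hx, hy]
  have hk : ∀ x : extSq A, φ x = 0 ↔ ∃ y : extSq A, x = y + y := by
    intro x
    constructor
    · intro hx
      apply twoSub_exists
      apply (QuotientAddGroup.eq_zero_iff x).1
      change ρ x = 0
      rw [← hcomp, hx, map_zero]
    · rintro ⟨y, rfl⟩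
      rw [map_add, h2]
  exact ⟨φ, hφ', hs, hk, tensor_zmod_two_equiv φ hs hk⟩

end
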